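/- There exists a norm ⦀·⦀ on Tsirelson's space T which is equivalent to the Tsirelson norm ‖·‖_T and has the property: whenever (x_n) is a block basis of the unit vector basis (t_i) with ⦀x_n⦀ = 1 for all n, and (s_n) is a spreading model of (x_n) with respect to the norm ⦀·⦀ (living in a Banach space S), then ‖s_1 + s_2‖_S < 2. -/

import Mathlib

/-!
The new norm is `N x = ‖x‖_T + ∑ⱼ 4⁻ʲ Aⱼ(x)`, where `Aⱼ(x)` is the supremum of
`∑_{i<j} ‖E_i x‖_T` over successive finite sets `E_0 < E_1 < ⋯`.  Since
`Aⱼ ≤ j ‖·‖_T`, it is equivalent to the Tsirelson norm.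

Suppose that a normalized block basis `(x_n)` has a spreading model with `‖s_0 + s_1‖ ≥ 2`.
Then the defect in the triangle inequality `N (x_k + x_l) ≤ N x_k + N x_l` tends to `0` as
`k < l` tend to infinity, and hence so does the defect for `‖·‖_T` and for every `Aⱼ`.

If `x < y` and `h = ⌈j/2⌉`, then of `j` successive sets either at most `h` meet `x` or at most
`h` meet `y`, so that `Aⱼ(x + y) ≤ max (A_h x + Aⱼ y) (Aⱼ x + A_h y)` (`multi_add_le`).  The
vanishing defect therefore gives `Aⱼ(x_n) ≤ A_h(x_n) + δ` for all large `n`, and by induction on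
`j`, `Aⱼ(x_n) ≤ ‖x_n‖_T + δ` for all large `n` (`multi_le_eventually`).

Fix `k` and let `r` bound the support of `x_k`.  In the formula for `‖x_k + x_l‖_T`, an
admissible family `n ≤ E_1 < ⋯ < E_n` with `n > r` does not see `x_k`, while for `n ≤ r` it
contributes at most `‖x_k‖_T + A_r(x_l) / 2` (`ts_add_le`).  For `l` large this gives
`‖x_k + x_l‖_T ≤ ‖x_k‖_T + ‖x_l‖_T / 2 + δ`, which contradicts the vanishing defect for `‖·‖_T`
because `‖x_n‖_T ≥ 1/3`.
-/

noncomputable section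

/-- sup norm of a finitely supported sequence -/
def supNorm (x : ℕ →₀ ℝ) : ℝ := ⨆ i, |x i|

/-- coordinate restriction of `x` to the finite set `E` -/
def restr (E : Finset ℕ) (x : ℕ →₀ ℝ) : ℕ →₀ ℝ := x.filter (· ∈ E)

/-- an admissible family of `m` successive finite sets whose elements are `≥ n`. -/
def AdmissibleOn (n m : ℕ) (E : Fin m → Finset ℕ) : Prop :=
  (∀ i j : Fin m, i < j → ∀ a ∈ E i, ∀ b ∈ E j, a < b) ∧
  (∀ i : Fin m, ∀ a ∈ E i, n ≤ a)

/-- `n ≤ E 0 < ⋯ < E (n-1)` -/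
def Admissible (n : ℕ) (E : Fin n → Finset ℕ) : Prop := AdmissibleOn n n E

/-- the iteration defining the Tsirelson norm. -/
def tsAux : ℕ → (ℕ →₀ ℝ) → ℝ
  | 0, x => supNorm x
  | k + 1, x => max (supNorm x)
      (sSup {r : ℝ | ∃ (n : ℕ) (E : Fin n → Finset ℕ), 0 < n ∧ Admissible n E ∧
        r = (1 / 2) * ∑ i, tsAux k (restr (E i) x)})

/-- the Tsirelson norm `‖x‖_T = lim_k ‖x‖_k` on finitely supported sequences -/
def tsirelsonNorm (x : ℕ →₀ ℝ) : ℝ := ⨆ k, tsAux k x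

/-- A basic sequence. -/
def IsBasicSeq {S : Type*} [NormedAddCommGroup S] [NormedSpace ℝ S] (s : ℕ → S) : Prop :=
  ∃ C : ℝ, ∀ m n : ℕ, m ≤ n → ∀ a : ℕ → ℝ,
    ‖∑ i ∈ Finset.range m, a i • s i‖ ≤ C * ‖∑ i ∈ Finset.range n, a i • s i‖

/-- `s` is a spreading model of the sequence `x` of finitely supported sequences,
with respect to the norm (function) `N`. -/
def IsSpreadingModelWith (N : (ℕ →₀ ℝ) → ℝ)
    {S : Type*} [NormedAddCommGroup S] [NormedSpace ℝ S]
    (x : ℕ → (ℕ →₀ ℝ)) (s : ℕ → S) : Prop :=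
  IsBasicSeq s ∧
  ∃ ε : ℕ → ℝ, (∀ n, 0 < ε n) ∧ Antitone ε ∧ Filter.Tendsto ε Filter.atTop (nhds 0) ∧
    ∀ (n : ℕ) (a : Fin n → ℝ), (∀ i, |a i| ≤ 1) →
      ∀ k : Fin n → ℕ, StrictMono k → (∀ i, n ≤ k i) →
        |N (∑ i, a i • x (k i)) - ‖∑ i, a i • s i‖| < ε n

/-- a block sequence of the unit vector basis of `c₀₀`. -/
def IsBlockSeq (x : ℕ → (ℕ →₀ ℝ)) : Prop :=
  (∀ n, x n ≠ 0) ∧ ∀ n, ∀ p ∈ (x n).support, ∀ q ∈ (x (n + 1)).support, p < q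


/-! ### The Tsirelson norm -/

/-- the `ℓ₁` norm; it serves only as an a priori bound making the suprema finite -/
def l1 (x : ℕ →₀ ℝ) : ℝ := ∑ p ∈ x.support, |x p|

lemma restr_apply (E : Finset ℕ) (x : ℕ →₀ ℝ) (p : ℕ) :
    restr E x p = if p ∈ E then x p else 0 := by
  simp [restr, Finsupp.filter_apply]

lemma restr_add (E : Finset ℕ) (x y : ℕ →₀ ℝ) : restr E (x + y) = restr E x + restr E y := by
  ext p; simp only [restr_apply, Finsupp.add_apply]; split_ifs <;> simp

lemma restr_smul (E : Finset ℕ) (a : ℝ) (x : ℕ →₀ ℝ) : restr E (a • x) = a • restr E x := by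
  ext p; simp only [restr_apply, Finsupp.smul_apply]; split_ifs <;> simp

lemma restr_comm (E F : Finset ℕ) (x : ℕ →₀ ℝ) : restr E (restr F x) = restr F (restr E x) := by
  ext p; simp only [restr_apply]; split_ifs <;> simp

lemma restr_eq_zero {E : Finset ℕ} {x : ℕ →₀ ℝ} (h : ∀ p ∈ E, p ∉ x.support) :
    restr E x = 0 := by
  ext p
  rw [restr_apply]
  split_ifs with hp
  · simpa using h p hp
  · rfl

lemma l1_nonneg (x : ℕ →₀ ℝ) : 0 ≤ l1 x := Finset.sum_nonneg fun _ _ => abs_nonneg _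

lemma abs_le_l1 (x : ℕ →₀ ℝ) (p : ℕ) : |x p| ≤ l1 x := by
  by_cases h : p ∈ x.support
  · exact Finset.single_le_sum (f := fun p => |x p|) (fun _ _ => abs_nonneg _) h
  · rw [Finsupp.notMem_support_iff.mp h, abs_zero]; exact l1_nonneg x

lemma l1_restr (E : Finset ℕ) (x : ℕ →₀ ℝ) :
    l1 (restr E x) = ∑ p ∈ x.support, if p ∈ E then |x p| else 0 := by
  unfold l1
  rw [Finset.sum_subset (s₂ := x.support)]
  · refine Finset.sum_congr rfl fun p _ => ?_
    rw [restr_apply]; split_ifs <;> simp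
  · intro p hp
    rw [Finsupp.mem_support_iff, restr_apply] at hp
    rw [Finsupp.mem_support_iff]
    intro h0; simp [h0] at hp
  · intro p _ hp
    rw [Finsupp.notMem_support_iff.mp hp, abs_zero]

lemma sum_l1_restr_le {n : ℕ} {E : Fin n → Finset ℕ} (hE : Admissible n E) (x : ℕ →₀ ℝ) :
    ∑ i, l1 (restr (E i) x) ≤ l1 x := by
  simp_rw [l1_restr]
  rw [Finset.sum_comm]
  refine Finset.sum_le_sum fun p _ => ?_
  rw [← Finset.sum_filter, Finset.sum_const, nsmul_eq_mul]
  have hc : (Finset.univ.filter fun i => p ∈ E i).card ≤ 1 := by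
    refine Finset.card_le_one.mpr fun i hi j hj => ?_
    simp only [Finset.mem_filter, Finset.mem_univ, true_and] at hi hj
    rcases lt_trichotomy i j with h | h | h
    · exact absurd (hE.1 i j h p hi p hj) (lt_irrefl _)
    · exact h
    · exact absurd (hE.1 j i h p hj p hi) (lt_irrefl _)
  have hc' : ((Finset.univ.filter fun i => p ∈ E i).card : ℝ) ≤ 1 := by exact_mod_cast hc
  nlinarith [abs_nonneg (x p)]

lemma abs_le_supNorm (x : ℕ →₀ ℝ) (p : ℕ) : |x p| ≤ supNorm x :=
  le_ciSup (f := fun i => |x i|) ⟨l1 x, by rintro _ ⟨i, rfl⟩; exact abs_le_l1 x i⟩ p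

lemma supNorm_le {x : ℕ →₀ ℝ} {M : ℝ} (h : ∀ p, |x p| ≤ M) : supNorm x ≤ M := ciSup_le h

lemma supNorm_nonneg (x : ℕ →₀ ℝ) : 0 ≤ supNorm x :=
  (abs_nonneg _).trans (abs_le_supNorm x 0)

lemma supNorm_le_tsAux (k : ℕ) (x : ℕ →₀ ℝ) : supNorm x ≤ tsAux k x := by
  cases k with
  | zero => exact le_rfl
  | succ k => exact le_max_left _ _

lemma tsAux_nonneg (k : ℕ) (x : ℕ →₀ ℝ) : 0 ≤ tsAux k x :=
  (supNorm_nonneg x).trans (supNorm_le_tsAux k x)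

lemma tsAux_succ_le {k : ℕ} {x : ℕ →₀ ℝ} {M : ℝ} (hs : supNorm x ≤ M)
    (hE : ∀ (n : ℕ) (E : Fin n → Finset ℕ), 0 < n → Admissible n E →
      (1 / 2) * ∑ i, tsAux k (restr (E i) x) ≤ M) : tsAux (k + 1) x ≤ M := by
  refine max_le hs (Real.sSup_le ?_ ((supNorm_nonneg x).trans hs))
  rintro r ⟨n, E, hn, hadm, rfl⟩
  exact hE n E hn hadm

lemma tsAux_le_l1 (k : ℕ) (x : ℕ →₀ ℝ) : tsAux k x ≤ l1 x := by
  induction k generalizing x with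
  | zero => exact supNorm_le (abs_le_l1 x)
  | succ k ih =>
    refine tsAux_succ_le (supNorm_le (abs_le_l1 x)) fun n E _ hE => ?_
    have h1 : ∑ i, tsAux k (restr (E i) x) ≤ l1 x :=
      (Finset.sum_le_sum fun i _ => ih _).trans (sum_l1_restr_le hE x)
    linarith [l1_nonneg x]

lemma half_sum_le_tsAux (k : ℕ) (x : ℕ →₀ ℝ) {n : ℕ} {E : Fin n → Finset ℕ} (hn : 0 < n)
    (hE : Admissible n E) : (1 / 2) * ∑ i, tsAux k (restr (E i) x) ≤ tsAux (k + 1) x := by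
  refine le_max_of_le_right (le_csSup ⟨l1 x, ?_⟩ ⟨n, E, hn, hE, rfl⟩)
  rintro r ⟨m, F, -, hF, rfl⟩
  have h1 : ∑ i, tsAux k (restr (F i) x) ≤ l1 x :=
    (Finset.sum_le_sum fun i _ => tsAux_le_l1 k _).trans (sum_l1_restr_le hF x)
  linarith [l1_nonneg x]

lemma tsAux_add_le (k : ℕ) (x y : ℕ →₀ ℝ) : tsAux k (x + y) ≤ tsAux k x + tsAux k y := by
  have hs : supNorm (x + y) ≤ supNorm x + supNorm y := supNorm_le fun p =>
    (abs_add_le _ _).trans (add_le_add (abs_le_supNorm x p) (abs_le_supNorm y p))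
  induction k generalizing x y with
  | zero => exact hs
  | succ k ih =>
    refine tsAux_succ_le
      (hs.trans (add_le_add (supNorm_le_tsAux _ x) (supNorm_le_tsAux _ y))) fun n E hn hE => ?_
    have h1 : ∑ i, tsAux k (restr (E i) (x + y)) ≤
        ∑ i, tsAux k (restr (E i) x) + ∑ i, tsAux k (restr (E i) y) := by
      rw [← Finset.sum_add_distrib]
      refine Finset.sum_le_sum fun i _ => ?_
      rw [restr_add]
      exact ih _ _ (supNorm_le fun p =>
        (abs_add_le _ _).trans (add_le_add (abs_le_supNorm _ p) (abs_le_supNorm _ p)))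
    linarith [half_sum_le_tsAux k x hn hE, half_sum_le_tsAux k y hn hE]

lemma tsAux_smul_le (k : ℕ) (a : ℝ) (x : ℕ →₀ ℝ) : tsAux k (a • x) ≤ |a| * tsAux k x := by
  have hs : ∀ x : ℕ →₀ ℝ, supNorm (a • x) ≤ |a| * supNorm x := fun x => supNorm_le fun p => by
    rw [Finsupp.smul_apply, smul_eq_mul, abs_mul]
    exact mul_le_mul_of_nonneg_left (abs_le_supNorm x p) (abs_nonneg a)
  induction k generalizing x with
  | zero => exact hs x
  | succ k ih =>
    refine tsAux_succ_le ((hs x).trans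
      (mul_le_mul_of_nonneg_left (supNorm_le_tsAux _ x) (abs_nonneg a))) fun n E hn hE => ?_
    have h1 : ∑ i, tsAux k (restr (E i) (a • x)) ≤ |a| * ∑ i, tsAux k (restr (E i) x) := by
      rw [Finset.mul_sum]
      refine Finset.sum_le_sum fun i _ => ?_
      rw [restr_smul]
      exact ih _
    have h2 := mul_le_mul_of_nonneg_left (half_sum_le_tsAux k x hn hE) (abs_nonneg a)
    linarith

lemma tsAux_restr_le (k : ℕ) (F : Finset ℕ) (x : ℕ →₀ ℝ) : tsAux k (restr F x) ≤ tsAux k x := by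
  have hs : ∀ x : ℕ →₀ ℝ, supNorm (restr F x) ≤ supNorm x := fun x => supNorm_le fun p => by
    rw [restr_apply]
    split_ifs
    · exact abs_le_supNorm x p
    · rw [abs_zero]; exact supNorm_nonneg x
  induction k generalizing x with
  | zero => exact hs x
  | succ k ih =>
    refine tsAux_succ_le ((hs x).trans (supNorm_le_tsAux _ x)) fun n E hn hE => ?_
    refine le_trans ?_ (half_sum_le_tsAux k x hn hE)
    have h1 : ∑ i, tsAux k (restr (E i) (restr F x)) ≤ ∑ i, tsAux k (restr (E i) x) :=
      Finset.sum_le_sum fun i _ => by rw [restr_comm]; exact ih _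
    linarith

lemma tsAux_le_ts (k : ℕ) (x : ℕ →₀ ℝ) : tsAux k x ≤ tsirelsonNorm x :=
  le_ciSup (f := fun k => tsAux k x) ⟨l1 x, by rintro _ ⟨i, rfl⟩; exact tsAux_le_l1 i x⟩ k

lemma ts_le {x : ℕ →₀ ℝ} {M : ℝ} (h : ∀ k, tsAux k x ≤ M) : tsirelsonNorm x ≤ M := ciSup_le h

lemma ts_nonneg (x : ℕ →₀ ℝ) : 0 ≤ tsirelsonNorm x := (tsAux_nonneg 0 x).trans (tsAux_le_ts 0 x)

lemma ts_add_le_add (x y : ℕ →₀ ℝ) :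
    tsirelsonNorm (x + y) ≤ tsirelsonNorm x + tsirelsonNorm y :=
  ts_le fun k => (tsAux_add_le k x y).trans (add_le_add (tsAux_le_ts k x) (tsAux_le_ts k y))

lemma ts_smul_le (a : ℝ) (x : ℕ →₀ ℝ) : tsirelsonNorm (a • x) ≤ |a| * tsirelsonNorm x :=
  ts_le fun k => (tsAux_smul_le k a x).trans
    (mul_le_mul_of_nonneg_left (tsAux_le_ts k x) (abs_nonneg a))

lemma ts_restr_le (F : Finset ℕ) (x : ℕ →₀ ℝ) : tsirelsonNorm (restr F x) ≤ tsirelsonNorm x :=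
  ts_le fun k => (tsAux_restr_le k F x).trans (tsAux_le_ts k x)

lemma eq_zero_of_ts {x : ℕ →₀ ℝ} (h : tsirelsonNorm x = 0) : x = 0 := by
  ext p
  have h1 := (abs_le_supNorm x p).trans ((supNorm_le_tsAux 0 x).trans (tsAux_le_ts 0 x))
  rw [h] at h1
  exact abs_nonpos_iff.mp h1

/-- Positive homogeneity follows from `f (a • x) ≤ |a| f x` by rescaling with `a⁻¹`. -/
lemma homogeneous_of_le {f : (ℕ →₀ ℝ) → ℝ} (h0 : ∀ x, 0 ≤ f x)
    (h : ∀ (a : ℝ) x, f (a • x) ≤ |a| * f x) (a : ℝ) (x : ℕ →₀ ℝ) : f (a • x) = |a| * f x := by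
  refine le_antisymm (h a x) ?_
  rcases eq_or_ne a 0 with rfl | ha
  · simpa using h0 _
  · have h1 := h a⁻¹ (a • x)
    rw [inv_smul_smul₀ ha, abs_inv] at h1
    have ha' : 0 < |a| := abs_pos.mpr ha
    calc |a| * f x ≤ |a| * (|a|⁻¹ * f (a • x)) := mul_le_mul_of_nonneg_left h1 ha'.le
      _ = f (a • x) := by field_simp

lemma ts_zero : tsirelsonNorm 0 = 0 := by
  simpa using homogeneous_of_le ts_nonneg ts_smul_le 0 0

/-! ### The seminorms given by finitely many successive sets -/

/-- `E 0 < E 1 < ⋯`; empty sets are allowed, so this also covers finite families -/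
def Successive (E : ℕ → Finset ℕ) : Prop := ∀ i j, i < j → ∀ a ∈ E i, ∀ b ∈ E j, a < b

/-- `multi j x` is the supremum of `∑_{i<j} ‖E_i x‖_T` over successive finite sets
`E_0 < ⋯ < E_{j-1}`, without any admissibility restriction. -/
def multi (j : ℕ) (x : ℕ →₀ ℝ) : ℝ :=
  sSup {r : ℝ | ∃ E, Successive E ∧ r = ∑ i ∈ Finset.range j, tsirelsonNorm (restr (E i) x)}

lemma sum_le_mul_ts (j : ℕ) (E : ℕ → Finset ℕ) (x : ℕ →₀ ℝ) :
    ∑ i ∈ Finset.range j, tsirelsonNorm (restr (E i) x) ≤ j * tsirelsonNorm x :=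
  (Finset.sum_le_sum fun i _ => ts_restr_le (E i) x).trans (by simp)

lemma le_multi (j : ℕ) (x : ℕ →₀ ℝ) {E : ℕ → Finset ℕ} (hE : Successive E) :
    ∑ i ∈ Finset.range j, tsirelsonNorm (restr (E i) x) ≤ multi j x := by
  refine le_csSup ⟨j * tsirelsonNorm x, ?_⟩ ⟨E, hE, rfl⟩
  rintro r ⟨F, -, rfl⟩
  exact sum_le_mul_ts j F x

lemma multi_le {j : ℕ} {x : ℕ →₀ ℝ} {M : ℝ}
    (h : ∀ E, Successive E → ∑ i ∈ Finset.range j, tsirelsonNorm (restr (E i) x) ≤ M) :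
    multi j x ≤ M := by
  refine csSup_le ⟨_, fun _ => ∅, fun i j _ a ha => by simp at ha, rfl⟩ ?_
  rintro r ⟨E, hE, rfl⟩
  exact h E hE

lemma multi_nonneg (j : ℕ) (x : ℕ →₀ ℝ) : 0 ≤ multi j x :=
  (Finset.sum_nonneg fun _ _ => ts_nonneg _).trans
    (le_multi j x (E := fun _ => ∅) fun i j _ a ha => by simp at ha)

lemma multi_le_mul_ts (j : ℕ) (x : ℕ →₀ ℝ) : multi j x ≤ j * tsirelsonNorm x :=
  multi_le fun _ _ => sum_le_mul_ts j _ x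

lemma multi_mono {i j : ℕ} (h : i ≤ j) (x : ℕ →₀ ℝ) : multi i x ≤ multi j x :=
  multi_le fun _ hE => (Finset.sum_le_sum_of_subset_of_nonneg
    (Finset.range_subset_range.mpr h) fun _ _ _ => ts_nonneg _).trans (le_multi j x hE)

lemma multi_add_le_add (j : ℕ) (x y : ℕ →₀ ℝ) : multi j (x + y) ≤ multi j x + multi j y := by
  refine multi_le fun E hE => ?_
  refine le_trans ?_ (add_le_add (le_multi j x hE) (le_multi j y hE))
  rw [← Finset.sum_add_distrib]
  exact Finset.sum_le_sum fun i _ => by rw [restr_add]; exact ts_add_le_add _ _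

lemma multi_smul_le (j : ℕ) (a : ℝ) (x : ℕ →₀ ℝ) : multi j (a • x) ≤ |a| * multi j x := by
  refine multi_le fun E hE => ?_
  refine le_trans ?_ (mul_le_mul_of_nonneg_left (le_multi j x hE) (abs_nonneg a))
  rw [Finset.mul_sum]
  exact Finset.sum_le_sum fun i _ => by rw [restr_smul]; exact ts_smul_le _ _

/-- For `x < y`, among `j` successive sets at most `⌈j/2⌉` meet the support of `x`, or at most
`⌈j/2⌉` meet the support of `y`. -/
lemma multi_add_le (j : ℕ) {x y : ℕ →₀ ℝ} (hxy : ∀ p ∈ x.support, ∀ q ∈ y.support, p < q) :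
    multi j (x + y) ≤ max (multi ((j + 1) / 2) x + multi j y)
      (multi j x + multi ((j + 1) / 2) y) := by
  refine multi_le fun E hE => ?_
  set h := (j + 1) / 2 with hh
  have hsum : ∑ i ∈ Finset.range j, tsirelsonNorm (restr (E i) (x + y)) ≤
      ∑ i ∈ Finset.range j, tsirelsonNorm (restr (E i) x) +
        ∑ i ∈ Finset.range j, tsirelsonNorm (restr (E i) y) := by
    rw [← Finset.sum_add_distrib]
    exact Finset.sum_le_sum fun i _ => by rw [restr_add]; exact ts_add_le_add _ _
  have hj : j = h + (j - h) := by omega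
  by_cases hc : ∃ i < h, ∃ q ∈ E i, q ∈ y.support
  · -- a set of index `< h` already reaches `y`, so no set of index `≥ h` meets `x`
    obtain ⟨i₀, hi₀, q, hq, hqy⟩ := hc
    refine le_trans ?_ (le_max_left _ _)
    have h1 : ∑ i ∈ Finset.range j, tsirelsonNorm (restr (E i) x) ≤ multi h x := by
      rw [hj, Finset.sum_range_add, Finset.sum_eq_zero (s := Finset.range (j - h)), add_zero]
      · exact le_multi h x hE
      · intro i _
        rw [restr_eq_zero, ts_zero]
        intro p hp hpx
        have h2 := hE i₀ (h + i) (by omega) q hq p hp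
        have h3 := hxy p hpx q hqy
        omega
    linarith [le_multi j y hE]
  · push Not at hc
    refine le_trans ?_ (le_max_right _ _)
    have h1 : ∑ i ∈ Finset.range j, tsirelsonNorm (restr (E i) y) ≤ multi h y := by
      rw [hj, Finset.sum_range_add, Finset.sum_eq_zero (s := Finset.range h), zero_add]
      · refine (le_multi (j - h) y (E := fun i => E (h + i)) ?_).trans (multi_mono (by omega) y)
        exact fun a b hab => hE _ _ (by omega)
      · intro i hi
        rw [restr_eq_zero (hc i (Finset.mem_range.mp hi)), ts_zero]
    linarith [le_multi j x hE]

lemma sum_fin_le_multi {n : ℕ} {E : Fin n → Finset ℕ} (hE : Admissible n E) (x : ℕ →₀ ℝ) :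
    ∑ i, tsirelsonNorm (restr (E i) x) ≤ multi n x := by
  have h := le_multi n x (E := fun i => if h : i < n then E ⟨i, h⟩ else ∅) (by
    intro i j hij a ha b hb
    simp only at ha hb
    split_ifs at ha hb with h1 h2
    · exact hE.1 _ _ (by simpa using hij) a ha b hb
    all_goals simp_all)
  rw [Finset.sum_range] at h
  simpa using h

/-- The key estimate for `x < y`: an admissible family of more than `r` sets misses `x`, and one
of at most `r` sets sees at most `multi r y / 2` of `y`. -/
lemma ts_add_le {x y : ℕ →₀ ℝ} (hxy : ∀ p ∈ x.support, ∀ q ∈ y.support, p < q) {r : ℕ}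
    (hr : ∀ p ∈ x.support, p ≤ r) :
    tsirelsonNorm (x + y) ≤
      max (tsirelsonNorm y) (tsirelsonNorm x + (1 / 2) * multi r y) := by
  set M := max (tsirelsonNorm y) (tsirelsonNorm x + (1 / 2) * multi r y) with hM
  have hyM : tsirelsonNorm y ≤ M := le_max_left _ _
  have hxM : tsirelsonNorm x + (1 / 2) * multi r y ≤ M := le_max_right _ _
  have hm := multi_nonneg r y
  have hs : supNorm (x + y) ≤ M := by
    refine supNorm_le fun p => ?_
    have hx := (abs_le_supNorm x p).trans ((supNorm_le_tsAux 0 x).trans (tsAux_le_ts 0 x))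
    have hy := (abs_le_supNorm y p).trans ((supNorm_le_tsAux 0 y).trans (tsAux_le_ts 0 y))
    rw [Finsupp.add_apply]
    by_cases hp : p ∈ x.support
    · have : y p = 0 := by
        by_contra hne
        exact lt_irrefl _ (hxy p hp p (Finsupp.mem_support_iff.mpr hne))
      rw [this, add_zero]; linarith
    · rw [Finsupp.notMem_support_iff.mp hp, zero_add]; linarith
  refine ts_le fun k => ?_
  cases k with
  | zero => exact hs
  | succ k =>
    refine tsAux_succ_le hs fun n E hn hE => ?_
    have h2 := (half_sum_le_tsAux k y hn hE).trans (tsAux_le_ts _ y)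
    by_cases hnr : n ≤ r
    · have h1 := (half_sum_le_tsAux k x hn hE).trans (tsAux_le_ts _ x)
      have h3 : ∑ i, tsAux k (restr (E i) (x + y)) ≤
          ∑ i, tsAux k (restr (E i) x) + ∑ i, tsirelsonNorm (restr (E i) y) := by
        rw [← Finset.sum_add_distrib]
        refine Finset.sum_le_sum fun i _ => ?_
        rw [restr_add]
        exact (tsAux_add_le k _ _).trans (add_le_add le_rfl (tsAux_le_ts k _))
      have h4 := (sum_fin_le_multi hE y).trans (multi_mono hnr y)
      linarith
    · have h3 : ∀ i, restr (E i) (x + y) = restr (E i) y := fun i => by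
        rw [restr_add, restr_eq_zero (x := x), zero_add]
        intro p hp hpx
        have := hE.2 i p hp
        have := hr p hpx
        omega
      simp_rw [h3]
      linarith

/-! ### The new norm -/

/-- the renorming `‖x‖_T + ∑ⱼ 4⁻ʲ multi j x` -/
def newNorm (x : ℕ →₀ ℝ) : ℝ := tsirelsonNorm x + ∑' j : ℕ, (1 / 4 : ℝ) ^ j * multi j x

lemma term_nonneg (x : ℕ →₀ ℝ) (j : ℕ) : 0 ≤ (1 / 4 : ℝ) ^ j * multi j x :=
  mul_nonneg (by positivity) (multi_nonneg j x)

lemma term_le (x : ℕ →₀ ℝ) (j : ℕ) :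
    (1 / 4 : ℝ) ^ j * multi j x ≤ (1 / 2 : ℝ) ^ j * tsirelsonNorm x := by
  have h1 : (j : ℝ) ≤ 2 ^ j := by exact_mod_cast Nat.lt_two_pow_self.le
  have h2 : multi j x ≤ 2 ^ j * tsirelsonNorm x :=
    (multi_le_mul_ts j x).trans (mul_le_mul_of_nonneg_right h1 (ts_nonneg x))
  calc (1 / 4 : ℝ) ^ j * multi j x ≤ (1 / 4 : ℝ) ^ j * (2 ^ j * tsirelsonNorm x) :=
        mul_le_mul_of_nonneg_left h2 (by positivity)
    _ = (1 / 2 : ℝ) ^ j * tsirelsonNorm x := by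
        rw [← mul_assoc, ← mul_pow]; norm_num

lemma term_summable (x : ℕ →₀ ℝ) : Summable fun j : ℕ => (1 / 4 : ℝ) ^ j * multi j x :=
  Summable.of_nonneg_of_le (term_nonneg x) (term_le x) (summable_geometric_two.mul_right _)

lemma ts_le_newNorm (x : ℕ →₀ ℝ) : tsirelsonNorm x ≤ newNorm x :=
  le_add_of_nonneg_right (tsum_nonneg (term_nonneg x))

lemma newNorm_le (x : ℕ →₀ ℝ) : newNorm x ≤ 3 * tsirelsonNorm x := by
  have h := (term_summable x).tsum_le_tsum (term_le x) (summable_geometric_two.mul_right _)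
  rw [tsum_mul_right, tsum_geometric_two] at h
  unfold newNorm
  linarith

lemma newNorm_nonneg (x : ℕ →₀ ℝ) : 0 ≤ newNorm x := (ts_nonneg x).trans (ts_le_newNorm x)

lemma newNorm_smul_le (a : ℝ) (x : ℕ →₀ ℝ) : newNorm (a • x) ≤ |a| * newNorm x := by
  unfold newNorm
  rw [mul_add, ← tsum_mul_left]
  refine add_le_add (ts_smul_le a x)
    ((term_summable _).tsum_le_tsum (fun j => ?_) ((term_summable x).mul_left _))
  have := mul_le_mul_of_nonneg_left (multi_smul_le j a x) (by positivity : (0 : ℝ) ≤ (1 / 4) ^ j)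
  linarith

lemma term_add_le (x y : ℕ →₀ ℝ) (j : ℕ) : (1 / 4 : ℝ) ^ j * multi j (x + y) ≤
    (1 / 4 : ℝ) ^ j * multi j x + (1 / 4 : ℝ) ^ j * multi j y := by
  rw [← mul_add]
  exact mul_le_mul_of_nonneg_left (multi_add_le_add j x y) (by positivity)

lemma tsum_add_le (x y : ℕ →₀ ℝ) : ∑' j : ℕ, (1 / 4 : ℝ) ^ j * multi j (x + y) ≤
    ∑' j : ℕ, (1 / 4 : ℝ) ^ j * multi j x + ∑' j : ℕ, (1 / 4 : ℝ) ^ j * multi j y := by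
  rw [← (term_summable x).tsum_add (term_summable y)]
  exact (term_summable _).tsum_le_tsum (term_add_le x y)
    ((term_summable x).add (term_summable y))

lemma newNorm_add_le (x y : ℕ →₀ ℝ) : newNorm (x + y) ≤ newNorm x + newNorm y := by
  unfold newNorm
  linarith [tsum_add_le x y, ts_add_le_add x y]

/-- The defect of `newNorm` in the triangle inequality dominates that of the Tsirelson norm. -/
lemma ts_defect_le (x y : ℕ →₀ ℝ) : tsirelsonNorm x + tsirelsonNorm y - tsirelsonNorm (x + y) ≤
    newNorm x + newNorm y - newNorm (x + y) := by
  unfold newNorm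
  linarith [tsum_add_le x y]

/-- The defect of `newNorm` in the triangle inequality dominates `4⁻ʲ` times that of `multi j`. -/
lemma multi_defect_le (j : ℕ) (x y : ℕ →₀ ℝ) :
    (1 / 4 : ℝ) ^ j * (multi j x + multi j y - multi j (x + y)) ≤
    newNorm x + newNorm y - newNorm (x + y) := by
  have hsum := ((term_summable x).add (term_summable y)).sub (term_summable (x + y))
  have h := hsum.le_tsum j fun i _ => sub_nonneg.mpr (term_add_le x y i)
  rw [((term_summable x).add (term_summable y)).tsum_sub (term_summable (x + y)),
    (term_summable x).tsum_add (term_summable y)] at h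
  unfold newNorm
  linarith [ts_add_le_add x y]

/-! ### Block sequences with vanishing defect -/

lemma block_lt {x : ℕ → (ℕ →₀ ℝ)} (hx : IsBlockSeq x) {k l : ℕ} (hkl : k < l) :
    ∀ p ∈ (x k).support, ∀ q ∈ (x l).support, p < q := by
  induction l, hkl using Nat.le_induction with
  | base => exact hx.2 k
  | succ l _ ih =>
    intro p hp q hq
    obtain ⟨r, hr⟩ := Finsupp.support_nonempty_iff.mpr (hx.1 l)
    exact (ih p hp r hr).trans (hx.2 l r hr q hq)

/-- If the defects vanish at infinity, the vectors far out cannot be split into boundedly many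
pieces with a significant gain. -/
lemma multi_le_eventually {x : ℕ → (ℕ →₀ ℝ)} (hx : IsBlockSeq x)
    (hdef : ∀ δ > 0, ∃ n₀, ∀ k l, n₀ ≤ k → k < l →
      newNorm (x k) + newNorm (x l) - newNorm (x k + x l) < δ) (j : ℕ) :
    ∀ δ > 0, ∃ n₀, ∀ n ≥ n₀, multi j (x n) ≤ tsirelsonNorm (x n) + δ := by
  induction j using Nat.strong_induction_on with
  | _ j ih =>
  intro δ hδ
  rcases Nat.lt_or_ge j 2 with hj | hj
  · refine ⟨0, fun n _ => ?_⟩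
    have h1 := multi_mono (by omega : j ≤ 1) (x n)
    have h2 := multi_le_mul_ts 1 (x n)
    rw [Nat.cast_one, one_mul] at h2
    linarith
  · obtain ⟨n₁, hn₁⟩ := ih ((j + 1) / 2) (by omega) (δ / 2) (by linarith)
    obtain ⟨n₂, hn₂⟩ := hdef ((1 / 4 : ℝ) ^ j * (δ / 2)) (by positivity)
    have hpair : ∀ k l, n₂ ≤ k → k < l →
        multi j (x k) ≤ multi ((j + 1) / 2) (x k) + δ / 2 ∨
        multi j (x l) ≤ multi ((j + 1) / 2) (x l) + δ / 2 := by
      intro k l hk hkl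
      have h1 := (multi_defect_le j (x k) (x l)).trans_lt (hn₂ k l hk hkl)
      have h2 := lt_of_mul_lt_mul_left h1 (by positivity)
      rcases le_max_iff.mp (multi_add_le j (block_lt hx hkl)) with h3 | h3
      · left; linarith
      · right; linarith
    -- the pairwise alternative can fail for at most one index beyond `n₂`
    have hev : ∃ n₃, ∀ n ≥ n₃, multi j (x n) ≤ multi ((j + 1) / 2) (x n) + δ / 2 := by
      by_cases hbad : ∃ k ≥ n₂, ¬ multi j (x k) ≤ multi ((j + 1) / 2) (x k) + δ / 2
      · obtain ⟨k, hk, hkb⟩ := hbad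
        exact ⟨k + 1, fun n hn => (hpair k n hk hn).resolve_left hkb⟩
      · push Not at hbad
        exact ⟨n₂, hbad⟩
    obtain ⟨n₃, hn₃⟩ := hev
    refine ⟨max n₁ n₃, fun n hn => ?_⟩
    have h1 := hn₁ n (le_of_max_le_left hn)
    have h2 := hn₃ n (le_of_max_le_right hn)
    linarith

/-- No normalized block sequence has vanishing defect. -/
lemma not_vanishing_defect {x : ℕ → (ℕ →₀ ℝ)} (hx : IsBlockSeq x) (hN : ∀ n, newNorm (x n) = 1)
    (hdef : ∀ δ > 0, ∃ n₀, ∀ k l, n₀ ≤ k → k < l →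
      newNorm (x k) + newNorm (x l) - newNorm (x k + x l) < δ) : False := by
  have hlow : ∀ n, 1 / 3 ≤ tsirelsonNorm (x n) := fun n => by
    have := newNorm_le (x n)
    rw [hN n] at this
    linarith
  obtain ⟨k, hk⟩ := hdef (1 / 12) (by norm_num)
  obtain ⟨n₀, hn₀⟩ := multi_le_eventually hx hdef ((x k).support.sup id) (1 / 12) (by norm_num)
  set l := max n₀ (k + 1) with hl
  have hkl : k < l := Nat.lt_of_succ_le (le_max_right _ _)
  have h1 := hn₀ l (le_max_left _ _)
  have h2 := (ts_defect_le (x k) (x l)).trans_lt (hk k l le_rfl hkl)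
  have h3 := hlow k
  have h4 := hlow l
  rcases le_max_iff.mp (ts_add_le (block_lt hx hkl) (r := (x k).support.sup id)
    fun p hp => Finset.le_sup (f := id) hp) with h5 | h5 <;> linarith

/-- `‖s 0 + s 1‖` is the limit of `N (x k + x l)` as `k < l` tend to infinity. -/
lemma spreading_pair {N : (ℕ →₀ ℝ) → ℝ} {S : Type} [NormedAddCommGroup S] [NormedSpace ℝ S]
    {x : ℕ → (ℕ →₀ ℝ)} {s : ℕ → S} (h : IsSpreadingModelWith N x s) (δ : ℝ) (hδ : 0 < δ) :
    ∃ n₀, ∀ k l, n₀ ≤ k → k < l → |N (x k + x l) - ‖s 0 + s 1‖| < δ := by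
  obtain ⟨-, ε, -, hanti, hlim, hε⟩ := h
  obtain ⟨m, hm⟩ := (hlim.eventually (gt_mem_nhds hδ)).exists
  refine ⟨m + 2, fun k l hk hkl => ?_⟩
  have h1 := hε (m + 2) (Fin.cons 1 (Fin.cons 1 fun _ => 0))
    (fun i => by
      refine Fin.cases ?_ (fun i => Fin.cases ?_ (fun i => ?_) i) i <;> simp)
    (Fin.cons k fun i => l + i)
    (by
      intro i j hij
      induction i using Fin.cases with
      | zero =>
        induction j using Fin.cases with
        | zero => exact absurd hij (lt_irrefl _)
        | succ j => simp only [Fin.cons_zero, Fin.cons_succ]; omega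
      | succ i =>
        induction j using Fin.cases with
        | zero => exact absurd hij (by simp)
        | succ j =>
          have : (i : ℕ) < j := by simpa using hij
          simp only [Fin.cons_succ]; omega)
    (fun i => by
      refine Fin.cases ?_ (fun i => ?_) i
      · simpa using hk
      · simp only [Fin.cons_succ]; omega)
  simp [Fin.sum_univ_succ] at h1
  exact h1.trans ((hanti (by omega)).trans_lt hm)

/-- There is a norm on Tsirelson's space, equivalent to the Tsirelson norm (stated
here on the dense subspace of finitely supported sequences), such that every
spreading model `(s_n)` of every block basis of the unit vector basis normalized in
the new norm satisfies `‖s 0 + s 1‖ < 2`. -/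
theorem stmt12 :
    ∃ N : (ℕ →₀ ℝ) → ℝ,
      (∀ x, 0 ≤ N x) ∧
      (∀ x, N x = 0 ↔ x = 0) ∧
      (∀ (a : ℝ) (x : ℕ →₀ ℝ), N (a • x) = |a| * N x) ∧
      (∀ x y : ℕ →₀ ℝ, N (x + y) ≤ N x + N y) ∧
      (∃ c C : ℝ, 0 < c ∧ ∀ x, c * tsirelsonNorm x ≤ N x ∧ N x ≤ C * tsirelsonNorm x) ∧
      ∀ x : ℕ → (ℕ →₀ ℝ), IsBlockSeq x → (∀ n, N (x n) = 1) →
        ∀ (S : Type) [NormedAddCommGroup S] [NormedSpace ℝ S] [CompleteSpace S]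
          (s : ℕ → S), IsSpreadingModelWith N x s → ‖s 0 + s 1‖ < 2 := by
  refine ⟨newNorm, newNorm_nonneg, fun x => ⟨fun h => ?_, ?_⟩,
    homogeneous_of_le newNorm_nonneg newNorm_smul_le, newNorm_add_le,
    ⟨1, 3, one_pos, fun x => ⟨by rw [one_mul]; exact ts_le_newNorm x, newNorm_le x⟩⟩, ?_⟩
  · exact eq_zero_of_ts (le_antisymm (h ▸ ts_le_newNorm x) (ts_nonneg x))
  · rintro rfl
    simpa using homogeneous_of_le newNorm_nonneg newNorm_smul_le 0 0
  · intro x hx hN S _ _ _ s hs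
    by_contra! hge
    refine not_vanishing_defect hx hN fun δ hδ => ?_
    obtain ⟨n₀, hn₀⟩ := spreading_pair hs δ hδ
    refine ⟨n₀, fun k l hk hkl => ?_⟩
    have := (abs_lt.mp (hn₀ k l hk hkl)).1
    rw [hN, hN]
    linarith
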